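/- arXiv:math/0207098 — 7 statements merged into one kernel-verified Lean document; each statement's English description precedes it below -/
import Mathlib

section
/- Let R be a commutative ring, n a positive integer, I ⊆ {1,…,n}, i ∈ I, and d ≥ 1 an integer. Let σ = σ_{I,i} be the blow-up chart substitution. Suppose f ∈ R[X_1,…,X_n] lies in the d-th power of the ideal generated by {X_j : j ∈ I}. Then X_i^d divides σ(f), and for any g ∈ R[X_1,…,X_n] with σ(f) = X_i^d·g the following identities hold: (1) for every j ∉ I: σ(∂f/∂X_j) = X_i^d·∂g/∂X_j; (2) for every j ∈ I with j ≠ i: σ(∂f/∂X_j) = X_i^{d−1}·∂g/∂X_j; (3) σ(∂f/∂X_i) = X_i^{d−1}·( d·g + X_i·∂g/∂X_i − Σ_{j∈I, j≠i} X_j·∂g/∂X_j ). -/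
open MvPolynomial

/-!
Differentiate `σ f = X i ^ d * g` with respect to each variable, using the chain rule on the left
and the Leibniz rule on the right. For `j ≠ i` only the term of `X j` survives in the chain rule,
and its coefficient is `1` or `X i` according as `j ∉ I` or `j ∈ I`; in the second case one cancels
the non-zero-divisor `X i`. For `j = i` the chain rule produces the terms `X j * σ (∂f/∂X j)` with
`j ∈ I \ {i}`, and these have just been computed.
-/

theorem derivation_algHom_eq_sum {R ι A M : Type*} [CommSemiring R] [CommSemiring A] [Algebra R A]
    [AddCommMonoid M] [Module R M] [Module A M] (D : Derivation R A M)
    (φ : MvPolynomial ι R →ₐ[R] A) {s : Finset ι} (hs : ∀ j ∉ s, D (φ (X j)) = 0)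
    (p : MvPolynomial ι R) :
    D (φ p) = ∑ j ∈ s, φ (pderiv j p) • D (φ (X j)) := by
  classical
  induction p using MvPolynomial.induction_on with
  | C a => simp [← algebraMap_eq]
  | add p q hp hq => simp only [map_add, hp, hq, add_smul, Finset.sum_add_distrib]
  | mul_X p l hp =>
    have sum_pderiv_X : ∑ j ∈ s, φ (pderiv j (X l)) • D (φ (X j)) = D (φ (X l)) := by
      simpa [pderiv_X, Pi.single_apply, apply_ite φ, ite_smul] using fun hl => (hs l hl).symm
    calc D (φ (p * X l))
        = φ p • D (φ (X l)) + φ (X l) • D (φ p) := by rw [map_mul, D.leibniz]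
      _ = ∑ j ∈ s, (φ p • φ (pderiv j (X l)) • D (φ (X j)) +
            φ (X l) • φ (pderiv j p) • D (φ (X j))) := by
          rw [Finset.sum_add_distrib, ← Finset.smul_sum, ← Finset.smul_sum, sum_pderiv_X, ← hp]
      _ = ∑ j ∈ s, φ (pderiv j (p * X l)) • D (φ (X j)) := by
          simp only [Derivation.leibniz, smul_eq_mul, map_add, map_mul, add_smul, mul_smul]

theorem pderiv_X_pow_mul_of_ne {R ι : Type*} [CommSemiring R] {i j : ι} (hji : j ≠ i) (d : ℕ)
    (g : MvPolynomial ι R) : pderiv j (X i ^ d * g) = X i ^ d * pderiv j g := by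
  simp [pderiv_X_of_ne hji.symm]

section BlowUpChart

variable {R ι : Type*} [CommSemiring R] [DecidableEq ι]

/-- The substitution `σ_{I,i}` expressing the blowing-up with centre `{X j = 0 : j ∈ I}` in the
coordinates of its chart `U_i`. It is defined for every index `i`, although only `i ∈ I` gives a
chart of the blowing-up. -/
noncomputable def blowUpChart (I : Finset ι) (i : ι) : MvPolynomial ι R →ₐ[R] MvPolynomial ι R :=
  aeval fun j => if j = i then X i else if j ∈ I then X i * X j else X j

variable {I : Finset ι} {i j : ι}

theorem blowUpChart_X (I : Finset ι) (i j : ι) :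
    blowUpChart I i (X j : MvPolynomial ι R) =
      if j = i then X i else if j ∈ I then X i * X j else X j :=
  aeval_X _ j

theorem X_dvd_blowUpChart_X (i : ι) (hj : j ∈ I) :
    (X i : MvPolynomial ι R) ∣ blowUpChart I i (X j) := by
  rw [blowUpChart_X, if_pos hj]
  split_ifs
  · exact dvd_rfl
  · exact dvd_mul_right _ _

theorem X_pow_dvd_blowUpChart (i : ι) {d : ℕ} {f : MvPolynomial ι R}
    (hf : f ∈ Ideal.span (X '' (I : Set ι) : Set (MvPolynomial ι R)) ^ d) :
    X i ^ d ∣ blowUpChart I i f := by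
  have span_le : Ideal.span (X '' (I : Set ι) : Set (MvPolynomial ι R)) ≤
      (Ideal.span {X i}).comap (blowUpChart I i) :=
    Ideal.span_le.2 <| Set.forall_mem_image.2 fun _ hj =>
      Ideal.mem_span_singleton.2 (X_dvd_blowUpChart_X i hj)
  have mem_pow := Ideal.le_comap_pow (blowUpChart I i) d (Ideal.pow_right_mono span_le d hf)
  rwa [Ideal.mem_comap, Ideal.span_singleton_pow, Ideal.mem_span_singleton] at mem_pow

theorem pderiv_blowUpChart_X_of_ne {l : ι} (hji : j ≠ i) (hlj : l ≠ j) :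
    pderiv j (blowUpChart I i (X l : MvPolynomial ι R)) = 0 := by
  rw [blowUpChart_X]
  split_ifs <;> simp [hji.symm, hlj]

theorem pderiv_blowUpChart_of_ne (hji : j ≠ i) (p : MvPolynomial ι R) :
    pderiv j (blowUpChart I i p) =
      blowUpChart I i (pderiv j p) * pderiv j (blowUpChart I i (X j)) := by
  rw [derivation_algHom_eq_sum (pderiv j) (blowUpChart I i) (s := {j}) fun l hl =>
      pderiv_blowUpChart_X_of_ne hji (Finset.notMem_singleton.1 hl),
    Finset.sum_singleton, smul_eq_mul]

theorem pderiv_blowUpChart_of_notMem (hjI : j ∉ I) (hji : j ≠ i) (p : MvPolynomial ι R) :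
    pderiv j (blowUpChart I i p) = blowUpChart I i (pderiv j p) := by
  rw [pderiv_blowUpChart_of_ne hji, blowUpChart_X, if_neg hji, if_neg hjI, pderiv_X_self, mul_one]

theorem pderiv_blowUpChart_of_mem (hjI : j ∈ I) (hji : j ≠ i) (p : MvPolynomial ι R) :
    pderiv j (blowUpChart I i p) = X i * blowUpChart I i (pderiv j p) := by
  have pderiv_X_image : pderiv j (blowUpChart I i (X j : MvPolynomial ι R)) = X i := by
    simp [blowUpChart_X, hjI, hji, hji.symm]
  rw [pderiv_blowUpChart_of_ne hji, pderiv_X_image, mul_comm]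

theorem pderiv_blowUpChart_self (I : Finset ι) (i : ι) (p : MvPolynomial ι R) :
    pderiv i (blowUpChart I i p) =
      blowUpChart I i (pderiv i p) + ∑ j ∈ I.erase i, X j * blowUpChart I i (pderiv j p) := by
  have pderiv_X_self_image : pderiv i (blowUpChart I i (X i : MvPolynomial ι R)) = 1 := by
    simp [blowUpChart_X]
  have pderiv_X_image_of_mem : ∀ j ∈ I.erase i,
      pderiv i (blowUpChart I i (X j : MvPolynomial ι R)) = X j := fun j hj => by
    obtain ⟨hji, hjI⟩ := Finset.mem_erase.1 hj
    simp [blowUpChart_X, hjI, hji]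
  have pderiv_X_image_of_notMem : ∀ j ∉ insert i (I.erase i),
      pderiv i (blowUpChart I i (X j : MvPolynomial ι R)) = 0 := fun j hj => by
    obtain ⟨hji, hjI⟩ : j ≠ i ∧ j ∉ I := by grind
    simp [blowUpChart_X, hjI, hji]
  rw [derivation_algHom_eq_sum (pderiv i) (blowUpChart I i) pderiv_X_image_of_notMem,
    Finset.sum_insert (Finset.notMem_erase i I), pderiv_X_self_image, smul_eq_mul, mul_one]
  congr 1
  refine Finset.sum_congr rfl fun j hj => ?_
  rw [pderiv_X_image_of_mem j hj, smul_eq_mul, mul_comm]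

variable {d : ℕ} {f g : MvPolynomial ι R}

theorem blowUpChart_pderiv_of_notMem (hfg : blowUpChart I i f = X i ^ d * g) (hjI : j ∉ I)
    (hji : j ≠ i) : blowUpChart I i (pderiv j f) = X i ^ d * pderiv j g := by
  rw [← pderiv_blowUpChart_of_notMem hjI hji, hfg, pderiv_X_pow_mul_of_ne hji]

theorem blowUpChart_pderiv_of_mem (hfg : blowUpChart I i f = X i ^ (d + 1) * g) (hjI : j ∈ I)
    (hji : j ≠ i) : blowUpChart I i (pderiv j f) = X i ^ d * pderiv j g := by
  rw [← X_mul_cancel_left_iff (i := i), ← pderiv_blowUpChart_of_mem hjI hji, hfg,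
    pderiv_X_pow_mul_of_ne hji, pow_succ', mul_assoc]

theorem blowUpChart_pderiv_self_add_sum (hfg : blowUpChart I i f = X i ^ (d + 1) * g) :
    blowUpChart I i (pderiv i f) + X i ^ d * ∑ j ∈ I.erase i, X j * pderiv j g =
      X i ^ d * (((d + 1 : ℕ) : MvPolynomial ι R) * g + X i * pderiv i g) := by
  have sum_eq : ∑ j ∈ I.erase i, X j * blowUpChart I i (pderiv j f) =
      X i ^ d * ∑ j ∈ I.erase i, X j * pderiv j g := by
    rw [Finset.mul_sum]
    refine Finset.sum_congr rfl fun j hj => ?_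
    obtain ⟨hji, hjI⟩ := Finset.mem_erase.1 hj
    rw [blowUpChart_pderiv_of_mem hfg hjI hji, mul_left_comm]
  rw [← sum_eq, ← pderiv_blowUpChart_self, hfg, pderiv_mul, pderiv_pow, pderiv_X_self,
    Nat.add_sub_cancel]
  ring

end BlowUpChart

theorem stmt_0_general {R ι : Type*} [CommRing R] [DecidableEq ι] {I : Finset ι} {i : ι}
    (hi : i ∈ I) {d : ℕ} (hd : 1 ≤ d) {f : MvPolynomial ι R}
    (hf : f ∈ Ideal.span (X '' (I : Set ι) : Set (MvPolynomial ι R)) ^ d) :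
    X i ^ d ∣ blowUpChart I i f ∧
    ∀ g : MvPolynomial ι R, blowUpChart I i f = X i ^ d * g →
      (∀ j, j ∉ I → blowUpChart I i (pderiv j f) = X i ^ d * pderiv j g) ∧
      (∀ j, j ∈ I → j ≠ i → blowUpChart I i (pderiv j f) = X i ^ (d - 1) * pderiv j g) ∧
      blowUpChart I i (pderiv i f) = X i ^ (d - 1) *
        ((d : MvPolynomial ι R) * g + X i * pderiv i g - ∑ j ∈ I.erase i, X j * pderiv j g) := by
  refine ⟨X_pow_dvd_blowUpChart i hf, fun g hfg => ?_⟩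
  obtain ⟨e, rfl⟩ := Nat.exists_eq_add_of_le' hd
  rw [Nat.add_sub_cancel]
  refine ⟨fun j hj => blowUpChart_pderiv_of_notMem hfg hj (ne_of_mem_of_not_mem hi hj).symm,
    fun j => blowUpChart_pderiv_of_mem hfg, ?_⟩
  rw [mul_sub]
  exact eq_sub_of_add_eq (blowUpChart_pderiv_self_add_sum hfg)

/-- **Lemma 5.1 (Bierstone–Milman, "Desingularization algorithms I").**
Transformation of partial derivatives under the blow-up chart substitution
`σ = σ_{I,i}` (given by `X i ↦ X i`, `X j ↦ X i * X j` for `j ∈ I \ {i}`,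
`X j ↦ X j` for `j ∉ I`), for `f` of order `≥ d` along the centre
`{X j = 0 : j ∈ I}`. -/
theorem stmt_0 {R : Type*} [CommRing R] {n : ℕ} (hn : 0 < n)
    (I : Finset (Fin n)) (i : Fin n) (hi : i ∈ I) (d : ℕ) (hd : 1 ≤ d)
    (σ : MvPolynomial (Fin n) R →ₐ[R] MvPolynomial (Fin n) R)
    (hσ : ∀ j : Fin n, σ (X j) =
      if j = i then X i else if j ∈ I then X i * X j else X j)
    (f : MvPolynomial (Fin n) R)
    (hf : f ∈ (Ideal.span (X '' (I : Set (Fin n)) :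
      Set (MvPolynomial (Fin n) R))) ^ d) :
    X i ^ d ∣ σ f ∧
    ∀ g : MvPolynomial (Fin n) R, σ f = X i ^ d * g →
      (∀ j : Fin n, j ∉ I → σ (pderiv j f) = X i ^ d * pderiv j g) ∧
      (∀ j : Fin n, j ∈ I → j ≠ i →
        σ (pderiv j f) = X i ^ (d - 1) * pderiv j g) ∧
      σ (pderiv i f) = X i ^ (d - 1) *
        ((d : MvPolynomial (Fin n) R) * g + X i * pderiv i g
          - ∑ j ∈ I.erase i, X j * pderiv j g) := by
  obtain rfl : σ = blowUpChart I i := algHom_ext fun j => by rw [hσ, blowUpChart_X]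
  exact stmt_0_general hi hd hf
end

section
/- Let K be a field, n ≥ 1, E ⊆ {1,…,n}, f ∈ K[X_1,…,X_n], and m ≥ 1 an integer. Then for every point c ∈ K^n the following are equivalent: (i) ord_c f ≥ m; (ii) ord_c f ≥ m, and ord_c (X_e·∂f/∂X_e) ≥ m−1 for every e ∈ E, and ord_c (∂f/∂X_u) ≥ m−1 for every u ∉ E. Equivalently, the equimultiple locus {c ∈ K^n : ord_c f ≥ m} coincides with the equimultiple locus of the collection D(f,m) = {(f,m)} ∪ {(X_e·∂f/∂X_e, m−1) : e ∈ E} ∪ {(∂f/∂X_u, m−1) : u ∉ E}. -/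
open MvPolynomial

/-- `ord_c f ≥ m`: `f` lies in the `m`-th power of the maximal ideal
`(X₁ - c₁, …, X_n - c_n)` at the point `c`. -/
def ordGe {K : Type*} [CommRing K] {n : ℕ} (c : Fin n → K)
    (f : MvPolynomial (Fin n) K) (m : ℕ) : Prop :=
  f ∈ (Ideal.span (Set.range fun j : Fin n => X j - C (c j))) ^ m

theorem derivation_mem_pow_smul_top {R A M : Type*} [CommSemiring R] [CommSemiring A]
    [AddCommMonoid M] [Algebra R A] [Module A M] [Module R M] (D : Derivation R A M)
    {I : Ideal A} {k : ℕ} {a : A} (ha : a ∈ I ^ (k + 1)) :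
    D a ∈ I ^ k • (⊤ : Submodule A M) := by
  induction k generalizing a with
  | zero => simp
  | succ k ih =>
    rw [pow_succ] at ha
    refine Submodule.mul_induction_on ha (fun b hb c hc => ?_) fun b c hb hc => ?_
    · have hbDc : b • D c ∈ I ^ (k + 1) • (⊤ : Submodule A M) :=
        Submodule.smul_mem_smul hb Submodule.mem_top
      have hcDb : c • D b ∈ I ^ (k + 1) • (⊤ : Submodule A M) := by
        rw [pow_succ', ← smul_eq_mul, Submodule.smul_assoc]
        exact Submodule.smul_mem_smul hc (ih hb)
      rw [D.leibniz]
      exact add_mem hbDc hcDb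
    · rw [map_add]
      exact add_mem hb hc

theorem derivation_mem_pow {R A : Type*} [CommSemiring R] [CommSemiring A] [Algebra R A]
    (D : Derivation R A A) {I : Ideal A} {k : ℕ} {a : A} (ha : a ∈ I ^ (k + 1)) :
    D a ∈ I ^ k := by
  simpa only [smul_eq_mul, Ideal.mul_top] using derivation_mem_pow_smul_top D ha

section OrdGe

variable {K : Type*} [CommRing K] {n m : ℕ} {c : Fin n → K} {f : MvPolynomial (Fin n) K}

theorem ordGe.mul_left (g : MvPolynomial (Fin n) K) (hf : ordGe c f m) : ordGe c (g * f) m :=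
  Ideal.mul_mem_left _ g hf

theorem ordGe.pderiv (hf : ordGe c f (m + 1)) (j : Fin n) : ordGe c (pderiv j f) m :=
  derivation_mem_pow (MvPolynomial.pderiv j) hf

end OrdGe

theorem stmt_3_general {K : Type*} [CommRing K] {n : ℕ} (E : Finset (Fin n))
    (f : MvPolynomial (Fin n) K) (m : ℕ) (c : Fin n → K) :
    ordGe c f (m + 1) ↔
      (ordGe c f (m + 1) ∧
       (∀ e ∈ E, ordGe c (X e * pderiv e f) m) ∧
       (∀ u : Fin n, u ∉ E → ordGe c (pderiv u f) m)) :=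
  ⟨fun hf => ⟨hf, fun e _ => (hf.pderiv e).mul_left (X e), fun u _ => hf.pderiv u⟩, And.left⟩

/-- **Corollary 5.6 (Bierstone–Milman, "Desingularization algorithms I").**
`S_{(f,μ_f)} = S_{D(f,μ_f)}`: for every point `c`, `ord_c f ≥ m` iff
`ord_c f ≥ m`, `ord_c (X_e · ∂f/∂X_e) ≥ m - 1` for every exceptional index
`e ∈ E`, and `ord_c (∂f/∂X_u) ≥ m - 1` for every complementary index
`u ∉ E`. -/
theorem stmt_3 {K : Type*} [Field K] {n : ℕ} (hn : 1 ≤ n)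
    (E : Finset (Fin n)) (f : MvPolynomial (Fin n) K) (m : ℕ) (hm : 1 ≤ m) :
    ∀ c : Fin n → K,
      ordGe c f m ↔
        (ordGe c f m ∧
         (∀ e ∈ E, ordGe c (X e * pderiv e f) (m - 1)) ∧
         (∀ u : Fin n, u ∉ E → ordGe c (pderiv u f) (m - 1))) := by
  obtain ⟨k, rfl⟩ := Nat.exists_eq_add_of_le' hm
  exact stmt_3_general E f k
end

section
/- Let R be a commutative ring, n ≥ 1, E ⊆ {1,…,n}, I ⊆ {1,…,n}, i ∈ I, d ≥ 1 an integer, and let σ = σ_{I,i} be the blow-up chart substitution. Suppose f ∈ R[X_1,…,X_n] lies in the d-th power of the ideal generated by {X_j : j ∈ I}, and let g ∈ R[X_1,…,X_n] be a polynomial with σ(f) = X_i^d·g. Then for every h in the set ∆_E(f), the polynomial X_i^{d−1} divides σ(h), and any q with σ(h) = X_i^{d−1}·q belongs to the ideal of R[X_1,…,X_n] generated by ∆_{E∪{i}}(g). -/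
open MvPolynomial

/-- `∆_{E'}(F) = {F} ∪ {X_e · ∂F/∂X_e : e ∈ E'} ∪ {∂F/∂X_u : u ∉ E'}`. -/
def deltaSet {R : Type*} [CommRing R] {n : ℕ} (E : Finset (Fin n))
    (F : MvPolynomial (Fin n) R) : Set (MvPolynomial (Fin n) R) :=
  {F} ∪ {h | ∃ e ∈ E, h = X e * pderiv e F} ∪
    {h | ∃ u : Fin n, u ∉ E ∧ h = pderiv u F}

/-!
Under the chart substitution `σ`, the vector field `X i * ∂/∂X i` corresponds to the Euler vector
field `∑ j ∈ I, X j * ∂/∂X j` of the centre, and for `u ≠ i` the vector field `X u * ∂/∂X u`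
corresponds to itself. Applying these vector fields to `σ f = X i ^ d * g` expresses `σ h`, for
each `h ∈ ∆_E(f)`, as `X i ^ (d - 1)` times a combination of `g` and its derivatives, and that
quotient is unique because `X i` is regular.
-/

section Derivations

variable {τ R : Type*} [CommSemiring R]

theorem derivation_sum_apply {ι A M : Type*} [CommSemiring A] [Algebra R A] [AddCommMonoid M]
    [Module A M] [Module R M] (s : Finset ι) (D : ι → Derivation R A M) (a : A) :
    (∑ j ∈ s, D j) a = ∑ j ∈ s, D j a :=
  (congrFun (map_sum Derivation.coeFnAddMonoidHom D s) a).trans (Finset.sum_apply a s _)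

theorem derivation_algHom_eq_mul {A : Type*} [CommSemiring A] [Algebra R A]
    (φ : MvPolynomial τ R →ₐ[R] A) (D : Derivation R A A)
    (D' : Derivation R (MvPolynomial τ R) (MvPolynomial τ R)) (c : A)
    (hX : ∀ j, D (φ (X j)) = c * φ (D' (X j))) (p : MvPolynomial τ R) :
    D (φ p) = c * φ (D' p) := by
  induction p using MvPolynomial.induction_on with
  | C a => simp only [algHom_C, Derivation.map_algebraMap, derivation_C, map_zero, mul_zero]
  | add p q hp hq => simp only [map_add, hp, hq, mul_add]
  | mul_X p j hp =>
    simp only [map_mul, Derivation.leibniz, smul_eq_mul, map_add, hX, hp]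
    ring

theorem pderiv_X_pow_mul_of_ne_s4 {i u : τ} (hui : u ≠ i) (k : ℕ) (g : MvPolynomial τ R) :
    pderiv u (X i ^ k * g) = X i ^ k * pderiv u g := by
  rw [pderiv_mul, pderiv_pow, pderiv_X_of_ne hui.symm, mul_zero, zero_mul, zero_add]

theorem X_mul_pderiv_X_pow_mul (i : τ) (k : ℕ) (g : MvPolynomial τ R) :
    X i * pderiv i (X i ^ k * g) = X i ^ k * (k • g + X i * pderiv i g) := by
  cases k with
  | zero => simp only [pow_zero, one_mul, zero_smul, zero_add]
  | succ k =>
    simp only [pderiv_mul, pderiv_pow, pderiv_X_self, Nat.add_sub_cancel, nsmul_eq_mul]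
    ring

theorem sum_X_mul_pderiv_X [DecidableEq τ] (I : Finset τ) (l : τ) :
    ∑ j ∈ I, X j * pderiv j (X l : MvPolynomial τ R) = if l ∈ I then X l else 0 := by
  simp [pderiv_X, Pi.single_apply]

end Derivations

section Chart

variable {τ R : Type*} [CommSemiring R] [DecidableEq τ]

/-- The substitution `σ_{I,i}` describing, in the `X i`-chart, the blowing-up with centre
`{X j = 0 : j ∈ I}`. The centre has finite codimension, but the ambient space may have infinitely
many coordinates. -/
noncomputable def blowupChart (I : Finset τ) (i : τ) : MvPolynomial τ R →ₐ[R] MvPolynomial τ R :=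
  aeval fun j ↦ if j = i then X i else if j ∈ I then X i * X j else X j

variable {I : Finset τ} {i u : τ}

theorem blowupChart_X (I : Finset τ) (i j : τ) :
    blowupChart I i (X j : MvPolynomial τ R) =
      if j = i then X i else if j ∈ I then X i * X j else X j :=
  aeval_X _ j

theorem blowupChart_X_self : blowupChart I i (X i : MvPolynomial τ R) = X i := by
  simp [blowupChart_X]

theorem blowupChart_X_of_mem (hu : u ∈ I) (hui : u ≠ i) :
    blowupChart I i (X u : MvPolynomial τ R) = X i * X u := by
  simp [blowupChart_X, hu, hui]

theorem blowupChart_X_of_notMem (hu : u ∉ I) (hui : u ≠ i) :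
    blowupChart I i (X u : MvPolynomial τ R) = X u := by
  simp [blowupChart_X, hu, hui]

theorem pderiv_blowupChart_X_of_ne {j : τ} (hj : j ≠ u) (hui : u ≠ i) :
    pderiv u (blowupChart I i (X j : MvPolynomial τ R)) = 0 := by
  rcases eq_or_ne j i with rfl | hji
  · rw [blowupChart_X_self, pderiv_X_of_ne hj]
  by_cases hjI : j ∈ I
  · simp [blowupChart_X_of_mem hjI hji, pderiv_X_of_ne hj, pderiv_X_of_ne hui.symm]
  · rw [blowupChart_X_of_notMem hjI hji, pderiv_X_of_ne hj]

theorem pderiv_blowupChart_of_mem (hu : u ∈ I) (hui : u ≠ i) (p : MvPolynomial τ R) :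
    pderiv u (blowupChart I i p) = X i * blowupChart I i (pderiv u p) := by
  refine derivation_algHom_eq_mul _ _ _ _ (fun j ↦ ?_) p
  rcases eq_or_ne j u with rfl | hj
  · simp [blowupChart_X_of_mem hu hui, pderiv_X_of_ne hui.symm]
  · simp [pderiv_blowupChart_X_of_ne hj hui, pderiv_X_of_ne hj]

theorem pderiv_blowupChart_of_notMem (hu : u ∉ I) (hui : u ≠ i) (p : MvPolynomial τ R) :
    pderiv u (blowupChart I i p) = blowupChart I i (pderiv u p) := by
  rw [← one_mul (blowupChart I i (pderiv u p))]
  refine derivation_algHom_eq_mul _ _ _ _ (fun j ↦ ?_) p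
  rcases eq_or_ne j u with rfl | hj
  · simp [blowupChart_X_of_notMem hu hui]
  · simp [pderiv_blowupChart_X_of_ne hj hui, pderiv_X_of_ne hj]

theorem X_mul_pderiv_blowupChart_of_ne (hui : u ≠ i) (p : MvPolynomial τ R) :
    X u * pderiv u (blowupChart I i p) = blowupChart I i (X u * pderiv u p) := by
  by_cases hu : u ∈ I
  · rw [pderiv_blowupChart_of_mem hu hui, map_mul, blowupChart_X_of_mem hu hui]
    ring
  · rw [pderiv_blowupChart_of_notMem hu hui, map_mul, blowupChart_X_of_notMem hu hui]

theorem X_mul_pderiv_blowupChart_X_self (hi : i ∈ I) (l : τ) :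
    X i * pderiv i (blowupChart I i (X l : MvPolynomial τ R)) =
      blowupChart I i (if l ∈ I then X l else 0) := by
  rcases eq_or_ne l i with rfl | hli
  · simp [hi, blowupChart_X_self]
  by_cases hl : l ∈ I
  · simp [hl, blowupChart_X_of_mem hl hli, pderiv_X_of_ne hli]
  · simp [hl, blowupChart_X_of_notMem hl hli, pderiv_X_of_ne hli]

theorem X_mul_pderiv_self_blowupChart (hi : i ∈ I) (p : MvPolynomial τ R) :
    X i * pderiv i (blowupChart I i p) = ∑ j ∈ I, blowupChart I i (X j * pderiv j p) := by
  let euler : Derivation R (MvPolynomial τ R) (MvPolynomial τ R) :=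
    ∑ j ∈ I, (X j : MvPolynomial τ R) • pderiv j
  have euler_apply (q : MvPolynomial τ R) : euler q = ∑ j ∈ I, X j * pderiv j q :=
    derivation_sum_apply I _ q
  have pullback (l : τ) :
      ((X i : MvPolynomial τ R) • pderiv i) (blowupChart I i (X l : MvPolynomial τ R)) =
        1 * blowupChart I i (euler (X l)) := by
    rw [one_mul, euler_apply, sum_X_mul_pderiv_X]
    exact X_mul_pderiv_blowupChart_X_self hi l
  rw [← map_sum, ← euler_apply, ← one_mul (blowupChart I i (euler p))]
  exact derivation_algHom_eq_mul _ (X i • pderiv i) euler 1 pullback p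

variable {k : ℕ} {f g : MvPolynomial τ R}

theorem blowupChart_pderiv_of_mem (hg : blowupChart I i f = X i ^ (k + 1) * g)
    (hu : u ∈ I) (hui : u ≠ i) :
    blowupChart I i (pderiv u f) = X i ^ k * pderiv u g := by
  refine isRegular_X.left (?_ : X i * _ = X i * _)
  rw [← pderiv_blowupChart_of_mem hu hui, hg, pderiv_X_pow_mul_of_ne_s4 hui, pow_succ', mul_assoc]

theorem blowupChart_pderiv_of_notMem (hg : blowupChart I i f = X i ^ k * g)
    (hu : u ∉ I) (hui : u ≠ i) :
    blowupChart I i (pderiv u f) = X i ^ k * pderiv u g := by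
  rw [← pderiv_blowupChart_of_notMem hu hui, hg, pderiv_X_pow_mul_of_ne_s4 hui]

theorem blowupChart_X_mul_pderiv_of_ne (hg : blowupChart I i f = X i ^ k * g) (hui : u ≠ i) :
    blowupChart I i (X u * pderiv u f) = X i ^ k * (X u * pderiv u g) := by
  rw [← X_mul_pderiv_blowupChart_of_ne hui, hg, pderiv_X_pow_mul_of_ne_s4 hui, mul_left_comm]

end Chart

section LogDerivatives

variable {τ R : Type*} [CommSemiring R] {E : Set τ} {F : MvPolynomial τ R}

/-- The set `∆_E(F)` for an arbitrary set of variables: `F` together with its derivatives along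
the standard basis of vector fields tangent to `{X e = 0}` for every `e ∈ E`. -/
def logDerivSet (E : Set τ) (F : MvPolynomial τ R) : Set (MvPolynomial τ R) :=
  {F} ∪ {h | ∃ e ∈ E, h = X e * pderiv e F} ∪ {h | ∃ u, u ∉ E ∧ h = pderiv u F}

theorem self_mem_span_logDerivSet : F ∈ Ideal.span (logDerivSet E F) :=
  Ideal.subset_span (.inl (.inl rfl))

theorem pderiv_mem_span_logDerivSet {u : τ} (hu : u ∉ E) :
    pderiv u F ∈ Ideal.span (logDerivSet E F) :=
  Ideal.subset_span (.inr ⟨u, hu, rfl⟩)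

theorem X_mul_pderiv_mem_span_logDerivSet (j : τ) :
    X j * pderiv j F ∈ Ideal.span (logDerivSet E F) := by
  by_cases hj : j ∈ E
  · exact Ideal.subset_span (.inl (.inr ⟨j, hj, rfl⟩))
  · exact Ideal.mul_mem_left _ _ (pderiv_mem_span_logDerivSet hj)

end LogDerivatives

section StrictTransform

variable {τ R : Type*} [CommRing R] [DecidableEq τ] {E : Set τ} {I : Finset τ} {i u : τ} {k : ℕ}
  {f g : MvPolynomial τ R}

theorem blowupChart_X_mul_pderiv_self (hi : i ∈ I) (hg : blowupChart I i f = X i ^ k * g) :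
    blowupChart I i (X i * pderiv i f) =
      X i ^ k * (k • g + X i * pderiv i g - ∑ j ∈ I.erase i, X j * pderiv j g) := by
  have euler := X_mul_pderiv_self_blowupChart hi f
  have sum_erase : ∑ j ∈ I.erase i, blowupChart I i (X j * pderiv j f) =
      X i ^ k * ∑ j ∈ I.erase i, X j * pderiv j g := by
    rw [Finset.mul_sum]
    exact Finset.sum_congr rfl fun j hj ↦
      blowupChart_X_mul_pderiv_of_ne hg (Finset.ne_of_mem_erase hj)
  rw [← Finset.add_sum_erase I _ hi, sum_erase, hg, X_mul_pderiv_X_pow_mul] at euler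
  rw [mul_sub, euler, add_sub_cancel_right]

theorem blowupChart_pderiv_self (hi : i ∈ I) (hg : blowupChart I i f = X i ^ (k + 1) * g) :
    blowupChart I i (pderiv i f) = X i ^ k *
      ((k + 1) • g + X i * pderiv i g - ∑ j ∈ I.erase i, X j * pderiv j g) := by
  have log_deriv := blowupChart_X_mul_pderiv_self hi hg
  rw [map_mul, blowupChart_X_self, pow_succ', mul_assoc] at log_deriv
  exact isRegular_X.left log_deriv

theorem exists_blowupChart_pderiv_self_eq (E : Set τ) (hi : i ∈ I)
    (hg : blowupChart I i f = X i ^ (k + 1) * g) :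
    ∃ r ∈ Ideal.span (logDerivSet E g), blowupChart I i (pderiv i f) = X i ^ k * r :=
  ⟨_, sub_mem
    (add_mem (nsmul_mem self_mem_span_logDerivSet _)
      (X_mul_pderiv_mem_span_logDerivSet i))
    (sum_mem fun j _ ↦ X_mul_pderiv_mem_span_logDerivSet j),
    blowupChart_pderiv_self hi hg⟩

theorem exists_blowupChart_X_mul_pderiv_eq (E : Set τ) (hi : i ∈ I)
    (hg : blowupChart I i f = X i ^ (k + 1) * g) (e : τ) :
    ∃ r ∈ Ideal.span (logDerivSet E g), blowupChart I i (X e * pderiv e f) = X i ^ k * r := by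
  rcases eq_or_ne e i with rfl | hei
  · obtain ⟨r, hr, hfr⟩ := exists_blowupChart_pderiv_self_eq E hi hg
    exact ⟨X e * r, Ideal.mul_mem_left _ _ hr, by
      rw [map_mul, hfr, blowupChart_X_self, mul_left_comm]⟩
  · exact ⟨X i * (X e * pderiv e g),
      Ideal.mul_mem_left _ _ (X_mul_pderiv_mem_span_logDerivSet e), by
      rw [blowupChart_X_mul_pderiv_of_ne hg hei, pow_succ, mul_assoc]⟩

theorem exists_blowupChart_pderiv_eq (hi : i ∈ I)
    (hg : blowupChart I i f = X i ^ (k + 1) * g) (hu : u ∉ E) :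
    ∃ r ∈ Ideal.span (logDerivSet (insert i E) g),
      blowupChart I i (pderiv u f) = X i ^ k * r := by
  rcases eq_or_ne u i with rfl | hui
  · exact exists_blowupChart_pderiv_self_eq _ hi hg
  have hpderiv : pderiv u g ∈ Ideal.span (logDerivSet (insert i E) g) :=
    pderiv_mem_span_logDerivSet (by simp [hui, hu])
  by_cases huI : u ∈ I
  · exact ⟨_, hpderiv, blowupChart_pderiv_of_mem hg huI hui⟩
  · exact ⟨X i * pderiv u g, Ideal.mul_mem_left _ _ hpderiv, by
      rw [blowupChart_pderiv_of_notMem hg huI hui, pow_succ, mul_assoc]⟩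

theorem exists_blowupChart_eq_of_mem_logDerivSet (hi : i ∈ I)
    (hg : blowupChart I i f = X i ^ (k + 1) * g) {h : MvPolynomial τ R}
    (hh : h ∈ logDerivSet E f) :
    ∃ r ∈ Ideal.span (logDerivSet (insert i E) g), blowupChart I i h = X i ^ k * r := by
  rcases hh with (rfl | ⟨e, -, rfl⟩) | ⟨u, hu, rfl⟩
  · exact ⟨X i * g, Ideal.mul_mem_left _ _ self_mem_span_logDerivSet, by
      rw [hg, pow_succ, mul_assoc]⟩
  · exact exists_blowupChart_X_mul_pderiv_eq _ hi hg e
  · exact exists_blowupChart_pderiv_eq hi hg hu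

theorem stmt_4_general (E : Set τ) (hi : i ∈ I) (hg : blowupChart I i f = X i ^ (k + 1) * g) :
    ∀ h ∈ logDerivSet E f,
      X i ^ k ∣ blowupChart I i h ∧
      ∀ q : MvPolynomial τ R, blowupChart I i h = X i ^ k * q →
        q ∈ Ideal.span (logDerivSet (insert i E) g) := by
  intro h hh
  obtain ⟨r, hr, hhr⟩ := exists_blowupChart_eq_of_mem_logDerivSet hi hg hh
  refine ⟨⟨r, hhr⟩, fun q hq ↦ ?_⟩
  obtain rfl : q = r := (isRegular_X_pow k).left (hq.symm.trans hhr)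
  exact hr

end StrictTransform

theorem deltaSet_eq_logDerivSet {R : Type*} [CommRing R] {n : ℕ} (E : Finset (Fin n))
    (F : MvPolynomial (Fin n) R) :
    deltaSet E F = logDerivSet (E : Set (Fin n)) F :=
  rfl

/-- **Lemma 5.8, chart version for a transformation of type (i)
(Bierstone–Milman, "Desingularization algorithms I").**
For the admissible blow-up chart substitution `σ = σ_{I,i}` and `f` of
order `≥ d` along the centre `{X_j = 0 : j ∈ I}`, with strict transform
`g` (`σ(f) = X_i^d · g`): every `h ∈ ∆_E(f)` satisfies
`X_i^{d-1} ∣ σ(h)`, and any quotient `q` with `σ(h) = X_i^{d-1} · q`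
lies in the ideal generated by `∆_{E ∪ {i}}(g)`. -/
theorem stmt_4 {R : Type*} [CommRing R] {n : ℕ} (hn : 1 ≤ n)
    (E I : Finset (Fin n)) (i : Fin n) (hi : i ∈ I) (d : ℕ) (hd : 1 ≤ d)
    (σ : MvPolynomial (Fin n) R →ₐ[R] MvPolynomial (Fin n) R)
    (hσ : ∀ j : Fin n, σ (X j) =
      if j = i then X i else if j ∈ I then X i * X j else X j)
    (f : MvPolynomial (Fin n) R)
    (hf : f ∈ (Ideal.span (X '' (I : Set (Fin n)) :
      Set (MvPolynomial (Fin n) R))) ^ d)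
    (g : MvPolynomial (Fin n) R) (hg : σ f = X i ^ d * g) :
    ∀ h ∈ deltaSet E f,
      X i ^ (d - 1) ∣ σ h ∧
      ∀ q : MvPolynomial (Fin n) R, σ h = X i ^ (d - 1) * q →
        q ∈ Ideal.span (deltaSet (insert i E) g) := by
  obtain ⟨k, rfl⟩ := Nat.exists_eq_add_of_le' hd
  obtain rfl : σ = blowupChart I i := algHom_ext fun j ↦ (hσ j).trans (blowupChart_X I i j).symm
  simpa only [deltaSet_eq_logDerivSet, Finset.coe_insert, Nat.add_sub_cancel] using
    stmt_4_general (E : Set (Fin n)) hi hg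
end

section
/- Let R be a commutative ring, n ≥ 2, and E ⊆ {1,…,n} with 1 ∈ E and 2 ∈ E. Let σ be the R-algebra endomorphism of R[X_1,…,X_n] with σ(X_1) = X_1, σ(X_2) = X_1·X_2, and σ(X_j) = X_j for j ≥ 3. Then for every f ∈ R[X_1,…,X_n] and every h ∈ ∆_E(f), the polynomial σ(h) belongs to the ideal of R[X_1,…,X_n] generated by ∆_E(σ(f)). -/
/-!
In logarithmic form the chart substitution acts on Euler operators linearly: writing
`θ_k = X_k ∂/∂X_k`, the chain rule gives `θ_k (σ f) = σ (θ_k f)` for `k ≠ a`, while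
`θ_a (σ f) = σ (θ_a f) + ∑_{j ∈ S} σ (θ_j f)` for the centre `X_a = 0`, `X_j = 0` (`j ∈ S`).
This unitriangular system can be inverted, so that each `σ (θ_e f)` with `e ∈ E` is a combination
of the `θ_e (σ f)`. The coordinates outside `E` are not touched by `σ`, and there `∂/∂X_u`
commutes with `σ`.
-/

open MvPolynomial

section ChainRule

variable {R ι B M : Type*} [CommSemiring R] [CommSemiring B] [Algebra R B]
  [AddCommMonoid M] [Module R M] [Module B M]

theorem derivation_algHom_apply [Fintype ι] (D : Derivation R B M) (φ : MvPolynomial ι R →ₐ[R] B)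
    (f : MvPolynomial ι R) :
    D (φ f) = ∑ i, φ (pderiv i f) • D (φ (X i)) := by
  classical
  induction f using MvPolynomial.induction_on with
  | C r => simp [← algebraMap_eq]
  | add f g hf hg => simp only [map_add, hf, hg, add_smul, Finset.sum_add_distrib]
  | mul_X f j hf =>
    have chain_X : ∑ i, φ (pderiv i (X j)) • D (φ (X i)) = D (φ (X j)) := by
      rw [Finset.sum_eq_single_of_mem j (Finset.mem_univ j) fun i _ hij ↦ by
        rw [pderiv_X_of_ne hij.symm, map_zero, zero_smul]]
      rw [pderiv_X_self, map_one, one_smul]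
    simp only [map_mul, map_add, Derivation.leibniz, smul_eq_mul, add_smul,
      Finset.sum_add_distrib, hf, mul_smul, ← Finset.smul_sum, chain_X]

end ChainRule

/-- `σ` is the substitution describing the blowing-up with centre `X_a = 0`, `X_j = 0` (`j ∈ S`)
in its `X_a`-chart, with `X_a` the chart variable. The index `a` is kept out of `S`, so that the
centre has codimension `S.card + 1`. -/
structure IsBlowupChart {R ι : Type*} [CommSemiring R] (a : ι) (S : Finset ι)
    (σ : MvPolynomial ι R →ₐ[R] MvPolynomial ι R) : Prop where
  notMem : a ∉ S
  map_X_of_mem : ∀ j ∈ S, σ (X j) = X a * X j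
  map_X_of_notMem : ∀ j ∉ S, σ (X j) = X j

theorem isBlowupChart_singleton {R ι : Type*} [CommSemiring R] {a b : ι} (hab : a ≠ b)
    {σ : MvPolynomial ι R →ₐ[R] MvPolynomial ι R} (ha : σ (X a) = X a)
    (hb : σ (X b) = X a * X b) (hne : ∀ j, j ≠ a → j ≠ b → σ (X j) = X j) :
    IsBlowupChart a {b} σ where
  notMem := by rwa [Finset.mem_singleton]
  map_X_of_mem j hj := by rwa [Finset.mem_singleton.mp hj]
  map_X_of_notMem j hj := by
    rw [Finset.mem_singleton] at hj
    obtain rfl | hja := eq_or_ne j a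
    · exact ha
    · exact hne j hja hj

namespace IsBlowupChart

variable {R ι : Type*} [CommSemiring R] {a k : ι} {S : Finset ι}
  {σ : MvPolynomial ι R →ₐ[R] MvPolynomial ι R}

theorem pderiv_map_X_of_ne (hσ : IsBlowupChart a S σ) (hka : k ≠ a) {i : ι} (hik : i ≠ k) :
    pderiv k (σ (X i)) = 0 := by
  by_cases hi : i ∈ S
  · simp [hσ.map_X_of_mem i hi, pderiv_X_of_ne hik, pderiv_X_of_ne hka.symm]
  · rw [hσ.map_X_of_notMem i hi, pderiv_X_of_ne hik]

theorem X_mul_pderiv_map_X_self (hσ : IsBlowupChart a S σ) (hka : k ≠ a) :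
    X k * pderiv k (σ (X k)) = σ (X k) := by
  by_cases hk : k ∈ S
  · simp [hσ.map_X_of_mem k hk, pderiv_X_of_ne hka.symm, mul_comm]
  · rw [hσ.map_X_of_notMem k hk, pderiv_X_self, mul_one]

theorem pderiv_chartVar_map_X_of_mem (hσ : IsBlowupChart a S σ) {j : ι} (hj : j ∈ S) :
    pderiv a (σ (X j)) = X j := by
  have hja : j ≠ a := ne_of_mem_of_not_mem hj hσ.notMem
  simp [hσ.map_X_of_mem j hj, pderiv_X_of_ne hja]

variable [Finite ι]

theorem pderiv_map_of_ne (hσ : IsBlowupChart a S σ) (hka : k ≠ a) (f : MvPolynomial ι R) :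
    pderiv k (σ f) = σ (pderiv k f) * pderiv k (σ (X k)) := by
  cases nonempty_fintype ι
  rw [derivation_algHom_apply, Finset.sum_eq_single_of_mem k (Finset.mem_univ k) fun i _ hik ↦ by
    rw [hσ.pderiv_map_X_of_ne hka hik, smul_zero], smul_eq_mul]

theorem pderiv_map_of_notMem (hσ : IsBlowupChart a S σ) (hka : k ≠ a) (hk : k ∉ S)
    (f : MvPolynomial ι R) : pderiv k (σ f) = σ (pderiv k f) := by
  rw [hσ.pderiv_map_of_ne hka, hσ.map_X_of_notMem k hk, pderiv_X_self, mul_one]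

theorem X_mul_pderiv_map_of_ne (hσ : IsBlowupChart a S σ) (hka : k ≠ a) (f : MvPolynomial ι R) :
    X k * pderiv k (σ f) = σ (X k * pderiv k f) := by
  rw [hσ.pderiv_map_of_ne hka, mul_left_comm, hσ.X_mul_pderiv_map_X_self hka, map_mul, mul_comm]

theorem pderiv_chartVar_map (hσ : IsBlowupChart a S σ) (f : MvPolynomial ι R) :
    pderiv a (σ f) = σ (pderiv a f) + ∑ j ∈ S, σ (pderiv j f) * X j := by
  classical
  cases nonempty_fintype ι
  have vanish : ∀ i ∈ Finset.univ, i ∉ insert a S →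
      σ (pderiv i f) • pderiv a (σ (X i)) = 0 := by
    intro i _ hi
    obtain ⟨hia, hiS⟩ : i ≠ a ∧ i ∉ S := by simpa only [Finset.mem_insert, not_or] using hi
    rw [hσ.map_X_of_notMem i hiS, pderiv_X_of_ne hia, smul_zero]
  rw [derivation_algHom_apply, ← Finset.sum_subset (Finset.subset_univ (insert a S)) vanish,
    Finset.sum_insert hσ.notMem, hσ.map_X_of_notMem a hσ.notMem, pderiv_X_self, smul_eq_mul,
    mul_one]
  exact congrArg _ <| Finset.sum_congr rfl fun j hj ↦ by
    rw [hσ.pderiv_chartVar_map_X_of_mem hj, smul_eq_mul]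

theorem X_mul_pderiv_chartVar_map (hσ : IsBlowupChart a S σ) (f : MvPolynomial ι R) :
    X a * pderiv a (σ f) = σ (X a * pderiv a f) + ∑ j ∈ S, σ (X j * pderiv j f) := by
  rw [hσ.pderiv_chartVar_map, mul_add, Finset.mul_sum, map_mul,
    hσ.map_X_of_notMem a hσ.notMem]
  refine congrArg _ <| Finset.sum_congr rfl fun j hj ↦ ?_
  rw [map_mul, hσ.map_X_of_mem j hj]
  ring

end IsBlowupChart

section DeltaSet

variable {R : Type*} [CommRing R] {n : ℕ} {E : Finset (Fin n)}

theorem self_mem_deltaSet (F : MvPolynomial (Fin n) R) : F ∈ deltaSet E F :=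
  .inl (.inl rfl)

theorem X_mul_pderiv_mem_deltaSet {e : Fin n} (he : e ∈ E) (F : MvPolynomial (Fin n) R) :
    X e * pderiv e F ∈ deltaSet E F :=
  .inl (.inr ⟨e, he, rfl⟩)

theorem pderiv_mem_deltaSet {u : Fin n} (hu : u ∉ E) (F : MvPolynomial (Fin n) R) :
    pderiv u F ∈ deltaSet E F :=
  .inr ⟨u, hu, rfl⟩

end DeltaSet

theorem IsBlowupChart.map_X_mul_pderiv_mem_span_deltaSet {R : Type*} [CommRing R] {n : ℕ}
    {E S : Finset (Fin n)} {a e : Fin n} {σ : MvPolynomial (Fin n) R →ₐ[R] MvPolynomial (Fin n) R}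
    (hσ : IsBlowupChart a S σ) (hSE : S ⊆ E) (he : e ∈ E) (f : MvPolynomial (Fin n) R) :
    σ (X e * pderiv e f) ∈ Ideal.span (deltaSet E (σ f)) := by
  have mem_of_ne {k : Fin n} (hk : k ∈ E) (hka : k ≠ a) :
      σ (X k * pderiv k f) ∈ Ideal.span (deltaSet E (σ f)) := by
    rw [← hσ.X_mul_pderiv_map_of_ne hka]
    exact Ideal.subset_span (X_mul_pderiv_mem_deltaSet hk _)
  obtain rfl | hea := eq_or_ne e a
  · rw [eq_sub_of_add_eq (hσ.X_mul_pderiv_chartVar_map f).symm]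
    refine sub_mem (Ideal.subset_span (X_mul_pderiv_mem_deltaSet he _)) (sum_mem fun j hj ↦ ?_)
    exact mem_of_ne (hSE hj) (ne_of_mem_of_not_mem hj hσ.notMem)
  · exact mem_of_ne he hea

theorem stmt_5_general {R : Type*} [CommRing R] {n : ℕ} {E S : Finset (Fin n)} {a : Fin n}
    {σ : MvPolynomial (Fin n) R →ₐ[R] MvPolynomial (Fin n) R} (hσ : IsBlowupChart a S σ)
    (haE : a ∈ E) (hSE : S ⊆ E) (f : MvPolynomial (Fin n) R) :
    ∀ h ∈ deltaSet E f, σ h ∈ Ideal.span (deltaSet E (σ f)) := by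
  rintro h ((rfl | ⟨e, he, rfl⟩) | ⟨u, hu, rfl⟩)
  · exact Ideal.subset_span (self_mem_deltaSet _)
  · exact hσ.map_X_mul_pderiv_mem_span_deltaSet hSE he f
  · rw [← hσ.pderiv_map_of_notMem (ne_of_mem_of_not_mem haE hu).symm (fun huS ↦ hu (hSE huS))]
    exact Ideal.subset_span (pderiv_mem_deltaSet hu _)

/-- **Lemma 5.8, chart version for a transformation of type (iii)
(Bierstone–Milman, "Desingularization algorithms I").**
For the chart substitution of an exceptional blowing-up with centre
`{X₁ = X₂ = 0}` (`σ(X₁) = X₁`, `σ(X₂) = X₁·X₂`, `σ(X_j) = X_j` for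
`j ≥ 3`), where the indices `1, 2` belong to the exceptional set `E`:
for every `h ∈ ∆_E(f)`, `σ(h)` lies in the ideal generated by
`∆_E(σ(f))`. (Variables are indexed by `Fin n`: `X_1` is `X ⟨0,_⟩`,
`X_2` is `X ⟨1,_⟩`, and "`j ≥ 3`" is "`2 ≤ (j : ℕ)`".) -/
theorem stmt_5 {R : Type*} [CommRing R] {n : ℕ} (hn : 2 ≤ n)
    (E : Finset (Fin n))
    (h1E : (⟨0, by omega⟩ : Fin n) ∈ E) (h2E : (⟨1, by omega⟩ : Fin n) ∈ E)
    (σ : MvPolynomial (Fin n) R →ₐ[R] MvPolynomial (Fin n) R)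
    (hσ1 : σ (X ⟨0, by omega⟩) = X (⟨0, by omega⟩ : Fin n))
    (hσ2 : σ (X ⟨1, by omega⟩) = X (⟨0, by omega⟩ : Fin n) * X ⟨1, by omega⟩)
    (hσj : ∀ j : Fin n, 2 ≤ (j : ℕ) → σ (X j) = X j)
    (f : MvPolynomial (Fin n) R) :
    ∀ h ∈ deltaSet E f, σ h ∈ Ideal.span (deltaSet E (σ f)) := by
  have two_le {j : Fin n} (hj0 : j ≠ ⟨0, by omega⟩) (hj1 : j ≠ ⟨1, by omega⟩) : 2 ≤ (j : ℕ) := by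
    rw [Ne, Fin.ext_iff] at hj0 hj1
    lia
  have hσ := isBlowupChart_singleton (by simp) hσ1 hσ2 fun j hj0 hj1 ↦ hσj j (two_le hj0 hj1)
  exact stmt_5_general hσ h1E (Finset.singleton_subset_iff.mpr h2E) f
end

section
/- Let K be an infinite field, f ∈ K[X_1,…,X_n] a nonzero polynomial, I ⊆ {1,…,n}, and let μ be the largest natural number m such that f belongs to the m-th power of the ideal generated by {X_j : j ∈ I}. Let C = {c ∈ K^n : c_j = 0 for all j ∈ I}. Then: (i) ord_c f ≥ μ for every c ∈ C; (ii) there is a nonzero polynomial h in the variables X_u, u ∉ I, such that ord_c f = μ for every c ∈ C with h(c) ≠ 0; in particular, there exists c ∈ C with ord_c f = μ. -/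
open MvPolynomial

/-!
Read `f` as a polynomial in the variables `X_j`, `j ∈ I`, with coefficients in `R[X_u : u ∉ I]`.
Then `f ∈ (X_j : j ∈ I)^m` means that every coefficient of degree `< m` vanishes. At a point `c`
with `c_j = 0` for `j ∈ I`, evaluating the coefficients at `c` carries the ideal of `c` into the
ideal of the variables `X_j`, so `ord_c f ≥ m` forces every coefficient of degree `< m` to vanish at
`c`. Hence any nonzero coefficient of degree `≤ μ` serves as `h`.
-/

section CoordinateSubspace

variable {σ R : Type*} [CommRing R]

/-- The ideal `(X_j - c_j : j)` of polynomials vanishing at the point `c`, whose powers measure the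
order at `c`; for `σ = Fin n`, `f ∈ pointIdeal c ^ m` unfolds to `ordGe c f m`. -/
noncomputable def pointIdeal (c : σ → R) : Ideal (MvPolynomial σ R) :=
  Ideal.span (Set.range fun j => X j - C (c j))

open Classical in
/-- The identification `R[X_i : i] ≃ R[X_u : u ∉ I][X_j : j ∈ I]`, which reads a polynomial as one
in the variables indexed by `I`, with coefficients in the remaining variables. -/
noncomputable def splitVars (I : Set σ) :
    MvPolynomial σ R ≃ₐ[R] MvPolynomial I (MvPolynomial (Iᶜ : Set σ) R) :=
  (renameEquiv R (Equiv.Set.sumCompl I).symm).trans (sumAlgEquiv R I (Iᶜ : Set σ))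

/-- The restriction of a polynomial to the slice `X_u = c_u`, `u ∉ I`, as a polynomial in the
variables indexed by `I`. -/
noncomputable def restrictSlice (I : Set σ) (c : σ → R) : MvPolynomial σ R →ₐ[R] MvPolynomial I R :=
  (mapAlgHom (aeval fun u : (Iᶜ : Set σ) => c u)).comp (splitVars I).toAlgHom

variable {I : Set σ} {c : σ → R} {f : MvPolynomial σ R} {m : ℕ}

lemma splitVars_X_of_mem {j : σ} (hj : j ∈ I) :
    splitVars I (X j : MvPolynomial σ R) = X ⟨j, hj⟩ := by
  classical simp [splitVars, Equiv.Set.sumCompl_symm_apply_of_mem hj]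

lemma splitVars_X_of_notMem {u : σ} (hu : u ∉ I) :
    splitVars I (X u : MvPolynomial σ R) = C (X ⟨u, hu⟩) := by
  classical simp [splitVars, Equiv.Set.sumCompl_symm_apply_of_notMem hu]

lemma map_splitVars_span_X_image :
    (Ideal.span (X '' I : Set (MvPolynomial σ R))).map (splitVars I) =
      idealOfVars I (MvPolynomial (Iᶜ : Set σ) R) := by
  rw [Ideal.map_span, Set.image_image, Set.image_eq_range]
  simp only [splitVars_X_of_mem, Subtype.coe_prop, Subtype.coe_eta]

lemma mem_span_X_image_pow_iff :
    f ∈ Ideal.span (X '' I : Set (MvPolynomial σ R)) ^ m ↔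
      ∀ a : I →₀ ℕ, a.degree < m → coeff a (splitVars I f) = 0 := by
  rw [← mem_pow_idealOfVars_iff', ← map_splitVars_span_X_image, ← Ideal.map_pow]
  exact (Ideal.apply_mem_of_equiv_iff (f := (splitVars I).toRingEquiv)).symm

lemma span_X_image_le_pointIdeal (hc : ∀ j ∈ I, c j = 0) :
    Ideal.span (X '' I) ≤ pointIdeal c := by
  refine Ideal.span_le.mpr ?_
  rintro _ ⟨j, hj, rfl⟩
  exact Ideal.subset_span ⟨j, by simp [hc j hj]⟩

lemma restrictSlice_X_of_mem {j : σ} (hj : j ∈ I) : restrictSlice I c (X j) = X ⟨j, hj⟩ := by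
  simp [restrictSlice, splitVars_X_of_mem hj]

lemma restrictSlice_X_of_notMem {u : σ} (hu : u ∉ I) : restrictSlice I c (X u) = C (c u) := by
  simp [restrictSlice, splitVars_X_of_notMem hu]

lemma coeff_restrictSlice (a : I →₀ ℕ) :
    coeff a (restrictSlice I c f) =
      eval (fun u : (Iᶜ : Set σ) => c u) (coeff a (splitVars I f)) := by
  simp [restrictSlice, coeff_map]

lemma map_restrictSlice_pointIdeal_le (hc : ∀ j ∈ I, c j = 0) :
    (pointIdeal c).map (restrictSlice I c) ≤ idealOfVars I R := by
  rw [pointIdeal, Ideal.map_span, Ideal.span_le]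
  rintro _ ⟨_, ⟨j, rfl⟩, rfl⟩
  by_cases hj : j ∈ I
  · simpa [restrictSlice_X_of_mem hj, hc j hj] using Ideal.subset_span (Set.mem_range_self _)
  · simp [restrictSlice_X_of_notMem hj, algHom_C, algebraMap_eq]

lemma eval_coeff_splitVars_eq_zero (hc : ∀ j ∈ I, c j = 0) (hf : f ∈ pointIdeal c ^ m)
    {a : I →₀ ℕ} (ha : a.degree < m) :
    eval (fun u : (Iᶜ : Set σ) => c u) (coeff a (splitVars I f)) = 0 := by
  have hmem : restrictSlice I c f ∈ idealOfVars I R ^ m := by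
    refine Ideal.pow_right_mono (map_restrictSlice_pointIdeal_le hc) m ?_
    rw [← Ideal.map_pow]
    exact Ideal.mem_map_of_mem _ hf
  rw [← coeff_restrictSlice]
  exact (mem_pow_idealOfVars_iff' m _).mp hmem a ha

lemma exists_supported_forall_notMem_pointIdeal_pow
    (hf : f ∉ Ideal.span (X '' I : Set (MvPolynomial σ R)) ^ m) :
    ∃ h : MvPolynomial σ R, h ≠ 0 ∧ h ∈ supported R Iᶜ ∧
      ∀ c : σ → R, (∀ j ∈ I, c j = 0) → eval c h ≠ 0 → f ∉ pointIdeal c ^ m := by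
  rw [mem_span_X_image_pow_iff] at hf
  push Not at hf
  obtain ⟨a, ha, hcoeff⟩ := hf
  refine ⟨rename Subtype.val (coeff a (splitVars I f)), ?_, ?_, fun c hc hev hord => hev ?_⟩
  · exact (map_ne_zero_iff _ (rename_injective _ Subtype.val_injective)).mpr hcoeff
  · rw [supported_eq_range_rename]
    exact AlgHom.mem_range_self _ _
  · rw [eval_rename]
    exact eval_coeff_splitVars_eq_zero hc hord ha

lemma exists_eval_ne_zero_of_mem_supported [IsDomain R] [Infinite R] {s : Set σ}
    {h : MvPolynomial σ R} (hs : h ∈ supported R s) (h0 : h ≠ 0) :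
    ∃ c : σ → R, (∀ j ∉ s, c j = 0) ∧ eval c h ≠ 0 := by
  rw [supported_eq_range_rename] at hs
  obtain ⟨q, rfl⟩ := hs
  have hq : q ≠ 0 := by
    rintro rfl
    exact h0 (map_zero _)
  obtain ⟨b, hb⟩ : ∃ b : s → R, eval b q ≠ 0 := by
    by_contra! hzero
    exact hq (MvPolynomial.funext fun b => by rw [hzero b, map_zero])
  refine ⟨Function.extend Subtype.val b 0, fun j hj => ?_, ?_⟩
  · exact Function.extend_apply' _ _ _ (by simpa using hj)
  · simpa [eval_rename, Subtype.val_injective.extend_comp] using hb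

theorem stmt_9_general [IsDomain R] [Infinite R] {μ : ℕ}
    (hμ : IsGreatest {m : ℕ | f ∈ Ideal.span (X '' I : Set (MvPolynomial σ R)) ^ m} μ) :
    (∀ c : σ → R, (∀ j ∈ I, c j = 0) → f ∈ pointIdeal c ^ μ) ∧
    (∃ h : MvPolynomial σ R, h ≠ 0 ∧ h ∈ supported R Iᶜ ∧
      ∀ c : σ → R, (∀ j ∈ I, c j = 0) → eval c h ≠ 0 →
        f ∈ pointIdeal c ^ μ ∧ f ∉ pointIdeal c ^ (μ + 1)) ∧
    ∃ c : σ → R, (∀ j ∈ I, c j = 0) ∧ f ∈ pointIdeal c ^ μ ∧ f ∉ pointIdeal c ^ (μ + 1) := by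
  have hge (c : σ → R) (hc : ∀ j ∈ I, c j = 0) : f ∈ pointIdeal c ^ μ :=
    Ideal.pow_right_mono (span_X_image_le_pointIdeal hc) μ hμ.1
  have hsucc : f ∉ Ideal.span (X '' I) ^ (μ + 1) := fun hmem =>
    Nat.not_succ_le_self μ (hμ.2 hmem)
  obtain ⟨h, h0, hs, hlt⟩ := exists_supported_forall_notMem_pointIdeal_pow hsucc
  obtain ⟨c, hc, hev⟩ := exists_eval_ne_zero_of_mem_supported hs h0
  replace hc : ∀ j ∈ I, c j = 0 := fun j hj => hc j (not_not_intro hj)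
  exact ⟨hge, ⟨h, h0, hs, fun c hc hev => ⟨hge c hc, hlt c hc hev⟩⟩,
    c, hc, hge c hc, hlt c hc hev⟩

end CoordinateSubspace

/-- **The order along a coordinate subspace is the generic value of the
order at its points (Definitions 1.4 of Bierstone–Milman,
"Desingularization algorithms I").**
Let `μ = μ_C(f)` be the largest `m` with `f` in the `m`-th power of the
ideal `(X_j : j ∈ I)`, and `C = {c : c_j = 0 for j ∈ I}`.  Then
(i) `ord_c f ≥ μ` for every `c ∈ C`; (ii) there is a nonzero polynomial
`h` in the complementary variables `X_u`, `u ∉ I`, with `ord_c f = μ`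
at every `c ∈ C` with `h(c) ≠ 0`; in particular some `c ∈ C` has
`ord_c f = μ`. -/
theorem stmt_9 {K : Type*} [Field K] [Infinite K] {n : ℕ}
    (f : MvPolynomial (Fin n) K) (hf : f ≠ 0) (I : Finset (Fin n))
    (μ : ℕ)
    (hμ : IsGreatest {m : ℕ |
      f ∈ (Ideal.span (X '' (I : Set (Fin n)) :
        Set (MvPolynomial (Fin n) K))) ^ m} μ) :
    (∀ c : Fin n → K, (∀ j ∈ I, c j = 0) → ordGe c f μ) ∧
    (∃ h : MvPolynomial (Fin n) K, h ≠ 0 ∧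
      h ∈ MvPolynomial.supported K {u : Fin n | u ∉ I} ∧
      ∀ c : Fin n → K, (∀ j ∈ I, c j = 0) → eval c h ≠ 0 →
        ordGe c f μ ∧ ¬ ordGe c f (μ + 1)) ∧
    ∃ c : Fin n → K, (∀ j ∈ I, c j = 0) ∧ ordGe c f μ ∧ ¬ ordGe c f (μ + 1) :=
  stmt_9_general hμ
end

section
/- Let K be a field and f ∈ K[[X_1,…,X_n]] a formal power series of order exactly d, i.e., the coefficient of f at every exponent of total degree < d vanishes and some coefficient of f at an exponent of total degree d is nonzero. Then for every l ∈ ℕ, the quotient K[[X_1,…,X_n]]/((f) + m_{l+1}) is a finite-dimensional K-vector space of dimension binomial(n+l, n) − binomial(n+l−d, n), with the convention that binomial(a, b) = 0 when a < b. -/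
/-- Total degree of an exponent. -/
def expDegree {σ : Type*} (e : σ →₀ ℕ) : ℕ := e.sum fun _ v => v

/-- The ideal `m_k` of formal power series whose coefficients vanish at
every exponent of total degree `< k`. -/
def mIdl (K : Type*) [Field K] (σ : Type*) (k : ℕ) :
    Ideal (MvPowerSeries σ K) where
  carrier := {f | ∀ e : σ →₀ ℕ, expDegree e < k → MvPowerSeries.coeff e f = 0}
  add_mem' := by
    intro a b ha hb e he
    simp only [Set.mem_setOf_eq] at *
    rw [map_add, ha e he, hb e he, add_zero]
  zero_mem' := by
    intro e _
    simp
  smul_mem' := by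
    classical
    intro c f hf e he
    simp only [Set.mem_setOf_eq] at *
    rw [smul_eq_mul, MvPowerSeries.coeff_mul]
    refine Finset.sum_eq_zero fun p hp => ?_
    rw [Finset.HasAntidiagonal.mem_antidiagonal] at hp
    have hdeg : expDegree e = expDegree p.1 + expDegree p.2 := by
      rw [← hp]
      exact Finsupp.sum_add_index' (fun _ => rfl) (fun _ _ _ => rfl)
    rw [hf p.2 (by omega), mul_zero]

/-!
Write `O = K[[X]]`. Multiplication by `f` induces an exact sequence
`0 → O / (m_k : f) → O / m_k → O / ((f) + m_k) → 0`. Since `K` has no zero divisors, the order of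
power series is additive on products, so `(m_k : f) = m_{k - d}` when `f` has order `d`. Finally,
the monomials of degree `< k` form a basis of `O / m_k`.
-/

section QuotientBySpanSingleton

universe u

variable (K : Type*) {R : Type*} {M : Type u} [Ring K] [Ring R] [AddCommGroup M] [Module K R]
  [Module K M] [Module R M] [IsScalarTower K R R] [IsScalarTower K R M]

theorem finrank_quotient_colon_singleton (N : Submodule R M) (x : M) :
    Module.finrank K (R ⧸ N.colon {x}) = Module.finrank K (Submodule.span R {N.mkQ x}) := by
  let φ := LinearMap.toSpanSingleton R (M ⧸ N) (N.mkQ x)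
  have ker_φ : LinearMap.ker φ = N.colon {x} := by
    ext r
    rw [LinearMap.mem_ker, LinearMap.toSpanSingleton_apply, ← map_smul, Submodule.mkQ_apply,
      Submodule.Quotient.mk_eq_zero, Submodule.mem_colon_singleton]
  rw [← ker_φ, ← LinearMap.range_toSpanSingleton]
  exact (φ.quotKerEquivRange.restrictScalars K).finrank_eq

theorem finrank_quotient_span_singleton_sup_add_finrank_quotient_colon
    [StrongRankCondition K] [HasRankNullity.{u} K] (N : Submodule R M) (x : M)
    [Module.Finite K (M ⧸ N)] :
    Module.finrank K (M ⧸ (Submodule.span R {x} ⊔ N)) + Module.finrank K (R ⧸ N.colon {x}) =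
      Module.finrank K (M ⧸ N) := by
  let S := Submodule.span R {N.mkQ x}
  have map_span : (Submodule.span R {x}).map N.mkQ = S := by
    rw [Submodule.map_span, Set.image_singleton]
  let e : ((M ⧸ N) ⧸ S.restrictScalars K) ≃ₗ[K] M ⧸ (Submodule.span R {x} ⊔ N) :=
    Submodule.Quotient.restrictScalarsEquiv K S ≪≫ₗ
      (Submodule.quotEquivOfEq _ _ map_span.symm ≪≫ₗ
        Submodule.quotientQuotientEquivQuotientSup N (Submodule.span R {x}) ≪≫ₗ
        Submodule.quotEquivOfEq _ _ (sup_comm _ _)).restrictScalars K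
  rw [finrank_quotient_colon_singleton, ← e.finrank_eq]
  exact (S.restrictScalars K).finrank_quotient_add_finrank

end QuotientBySpanSingleton

section Counting

variable (σ : Type*) [Finite σ]

theorem ncard_degree_eq (i : ℕ) :
    {e : σ →₀ ℕ | e.degree = i}.ncard = (Nat.card σ).multichoose i := by
  classical
  have := Fintype.ofFinite σ
  have eq_antidiag : {e : σ →₀ ℕ | e.degree = i} =
      (Finset.univ.finsuppAntidiag i : Finset (σ →₀ ℕ)) := by
    ext e
    simp [Finsupp.degree_eq_sum]
  rw [eq_antidiag, Set.ncard_coe_finset, Finset.card_finsuppAntidiag_nat_eq_multichoose,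
    Finset.card_univ, Nat.card_eq_fintype_card]

theorem ncard_degree_lt (k : ℕ) :
    {e : σ →₀ ℕ | e.degree < k}.ncard = ∑ i ∈ Finset.range k, (Nat.card σ).multichoose i := by
  induction k with
  | zero => simp
  | succ k ih =>
    have split : {e : σ →₀ ℕ | e.degree < k + 1} = {e | e.degree < k} ∪ {e | e.degree = k} := by
      ext e
      exact Nat.lt_succ_iff_lt_or_eq
    have disjoint : Disjoint {e : σ →₀ ℕ | e.degree < k} {e | e.degree = k} :=
      Set.disjoint_left.2 fun _ hlt heq => hlt.ne heq
    rw [split, Set.ncard_union_eq disjoint (Finsupp.finite_of_degree_lt k)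
      (Finsupp.finite_of_degree_eq k), ih, ncard_degree_eq, Finset.sum_range_succ]

end Counting

section Truncation

/-- The family of coefficients of degree `< k` of a power series; its kernel is `m_k`, so that it
represents truncation modulo `m_k`. -/
def coeffsDegreeLT (R σ : Type*) [Semiring R] (k : ℕ) :
    MvPowerSeries σ R →ₗ[R] ({e : σ →₀ ℕ // e.degree < k} → R) :=
  LinearMap.funLeft R R Subtype.val

theorem coeffsDegreeLT_surjective (R σ : Type*) [Semiring R] (k : ℕ) :
    Function.Surjective (coeffsDegreeLT R σ k) :=
  LinearMap.funLeft_surjective_of_injective R R _ Subtype.val_injective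

variable {K σ : Type*} [Field K]

theorem mem_mIdl_iff_le_order {k : ℕ} {g : MvPowerSeries σ K} :
    g ∈ mIdl K σ k ↔ (k : ℕ∞) ≤ g.order :=
  ⟨MvPowerSeries.nat_le_order, fun h _ he =>
    MvPowerSeries.coeff_of_lt_order ((Nat.cast_lt.2 he).trans_le h)⟩

theorem mIdl_colon_singleton {f : MvPowerSeries σ K} {d : ℕ} (hf : f.order = d) (k : ℕ) :
    (mIdl K σ k).colon {f} = mIdl K σ (k - d) := by
  ext g
  rw [Submodule.mem_colon_singleton, smul_eq_mul, mem_mIdl_iff_le_order, mem_mIdl_iff_le_order,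
    MvPowerSeries.order_mul, hf, ENat.natCast_sub, tsub_le_iff_right]

variable (K σ)

theorem ker_coeffsDegreeLT (k : ℕ) :
    LinearMap.ker (coeffsDegreeLT K σ k) = (mIdl K σ k).restrictScalars K := by
  ext g
  exact funext_iff.trans Subtype.forall

/-- The isomorphism of `K[[X]] / m_k` with the space of coefficient families in degrees `< k`. -/
noncomputable def quotientMIdlEquiv (k : ℕ) :
    (MvPowerSeries σ K ⧸ mIdl K σ k) ≃ₗ[K] ({e : σ →₀ ℕ // e.degree < k} → K) :=
  (Submodule.Quotient.restrictScalarsEquiv K (mIdl K σ k)).symm ≪≫ₗ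
    Submodule.quotEquivOfEq _ _ (ker_coeffsDegreeLT K σ k).symm ≪≫ₗ
    (coeffsDegreeLT K σ k).quotKerEquivOfSurjective (coeffsDegreeLT_surjective K σ k)

variable [Finite σ]

instance finite_quotient_mIdl (k : ℕ) : Module.Finite K (MvPowerSeries σ K ⧸ mIdl K σ k) :=
  have : Finite {e : σ →₀ ℕ // e.degree < k} := Finsupp.finite_of_degree_lt k
  Module.Finite.equiv (quotientMIdlEquiv K σ k).symm

theorem finrank_quotient_mIdl (k : ℕ) :
    Module.finrank K (MvPowerSeries σ K ⧸ mIdl K σ k) =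
      ∑ i ∈ Finset.range k, (Nat.card σ).multichoose i := by
  have : Fintype {e : σ →₀ ℕ // e.degree < k} := (Finsupp.finite_of_degree_lt k).fintype
  rw [(quotientMIdlEquiv K σ k).finrank_eq, Module.finrank_fintype_fun_eq_card,
    ← Nat.card_eq_fintype_card, ← ncard_degree_lt]
  rfl

theorem finrank_quotient_mIdl_succ (l : ℕ) :
    Module.finrank K (MvPowerSeries σ K ⧸ mIdl K σ (l + 1)) =
      (Nat.card σ + l).choose (Nat.card σ) := by
  rw [finrank_quotient_mIdl, Nat.sum_range_multichoose, add_comm]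

variable {K σ}

theorem finrank_quotient_mIdl_succ_sub_order {f : MvPowerSeries σ K} {d : ℕ} (hf : f.order = d)
    (l : ℕ) :
    Module.finrank K (MvPowerSeries σ K ⧸ mIdl K σ (l + 1 - d)) =
      (Nat.card σ + l - d).choose (Nat.card σ) := by
  rcases le_or_gt d l with hdl | hld
  · rw [Nat.sub_add_comm hdl, finrank_quotient_mIdl_succ, Nat.add_sub_assoc hdl]
  · -- The case `Nat.card σ = 0` has to be excluded because `Nat.choose 0 0 = 1`.
    have card_pos : 0 < Nat.card σ := by
      obtain ⟨⟨e, -, he⟩, -⟩ := MvPowerSeries.order_eq_nat.1 hf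
      have e_ne_zero : e ≠ 0 := by
        rintro rfl
        rw [map_zero] at he
        omega
      obtain ⟨i, -⟩ := Finsupp.ne_iff.1 e_ne_zero
      exact Finite.card_pos_iff.2 ⟨i⟩
    rw [finrank_quotient_mIdl, Nat.sub_eq_zero_of_le hld, Finset.sum_range_zero,
      Nat.choose_eq_zero_of_lt (by omega)]

end Truncation

theorem stmt_10_general {K σ : Type*} [Field K] [Finite σ] {f : MvPowerSeries σ K} {d : ℕ}
    (hf : f.order = d) (l : ℕ) :
    Module.Finite K (MvPowerSeries σ K ⧸ (Ideal.span {f} ⊔ mIdl K σ (l + 1))) ∧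
      Module.finrank K (MvPowerSeries σ K ⧸ (Ideal.span {f} ⊔ mIdl K σ (l + 1))) =
        (Nat.card σ + l).choose (Nat.card σ) - (Nat.card σ + l - d).choose (Nat.card σ) := by
  constructor
  · exact .of_surjective (Ideal.Quotient.factorₐ K le_sup_right).toLinearMap
      (Ideal.Quotient.factor_surjective le_sup_right)
  · have additivity := finrank_quotient_span_singleton_sup_add_finrank_quotient_colon K
      (mIdl K σ (l + 1)) f
    rw [mIdl_colon_singleton hf, finrank_quotient_mIdl_succ,
      finrank_quotient_mIdl_succ_sub_order hf] at additivity
    exact Nat.eq_sub_of_add_eq additivity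

/-- **The Hilbert–Samuel function of a hypersurface is determined by its
order (Examples 1.8(3) of Bierstone–Milman, "Desingularization
algorithms I").**
If `f ∈ K[[X₁,…,X_n]]` has order exactly `d`, then for every `l`,
`K[[X]]/((f) + m^{l+1})` is finite-dimensional over `K` of dimension
`(n+l).choose n - (n+l-d).choose n` (with truncated subtraction, so
`choose a b = 0` when `a < b`). -/
theorem stmt_10 {K : Type*} [Field K] {n : ℕ}
    (f : MvPowerSeries (Fin n) K) (d : ℕ)
    (hlow : ∀ e : Fin n →₀ ℕ, expDegree e < d → MvPowerSeries.coeff e f = 0)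
    (hd : ∃ e : Fin n →₀ ℕ, expDegree e = d ∧ MvPowerSeries.coeff e f ≠ 0)
    (l : ℕ) :
    Module.Finite K
      (MvPowerSeries (Fin n) K ⧸ (Ideal.span {f} ⊔ mIdl K (Fin n) (l + 1))) ∧
    Module.finrank K
      (MvPowerSeries (Fin n) K ⧸ (Ideal.span {f} ⊔ mIdl K (Fin n) (l + 1)))
      = (n + l).choose n - (n + l - d).choose n := by
  obtain ⟨e, he, hne⟩ := hd
  have hf : f.order = d := MvPowerSeries.order_eq_nat.2 ⟨⟨e, hne, he⟩, hlow⟩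
  simpa only [Nat.card_fin] using stmt_10_general hf l
end

section
/- Let K be a field, n ∈ ℕ, R = K[[X_1,…,X_n]], and let N be any set of exponents α ∈ ℕ^n. Let R^N := {f ∈ R : the coefficient of f at α vanishes for every α ∈ N}, a K-linear subspace of R, and let J be an ideal of R. Assume: (i) R = J + R^N, i.e., every f ∈ R can be written f = g + h with g ∈ J and h ∈ R^N; and (ii) for every k ∈ ℕ, the K-vector space R/(J + m_{k+1}) is finite-dimensional of dimension equal to the cardinality of the finite set {α ∈ ℕ^n : α ∉ N, |α| ≤ k}. Then: (a) J ∩ R^N = {0}, so R = J ⊕ R^N as K-vector spaces; (b) for every k ∈ ℕ, R^N ∩ (J + m_{k+1}) = R^N ∩ m_{k+1}; and (c) if f = g + h with g ∈ J and h ∈ R^N, and every coefficient of f at exponents of total degree < k vanishes, then the same holds for g and for h. -/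
/-- `R^N`: the `K`-linear subspace of power series supported in the
complement of the set `N` of exponents. -/
def coSupported (K : Type*) [Field K] (σ : Type*) (N : Set (σ →₀ ℕ)) :
    Submodule K (MvPowerSeries σ K) where
  carrier := {f | ∀ α ∈ N, MvPowerSeries.coeff α f = 0}
  add_mem' := by
    intro a b ha hb α hα
    simp only [Set.mem_setOf_eq] at *
    rw [map_add, ha α hα, hb α hα, add_zero]
  zero_mem' := by
    intro α _
    simp
  smul_mem' := by
    intro c f hf α hα
    simp only [Set.mem_setOf_eq] at *
    rw [map_smul, hf α hα, smul_zero]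

/-!
On `R^N` the coefficients at the exponents `α ∉ N`, `|α| ≤ k`, have joint kernel `R^N ∩ m_{k+1}`,
while `R^N → R/(J + m_{k+1})` is onto with the possibly larger kernel `R^N ∩ (J + m_{k+1})`. Hence
the second map factors through the first, by a surjection from a space of dimension
`#{α ∉ N : |α| ≤ k}`. The dimension hypothesis makes this surjection an isomorphism, so the two
kernels agree: this is (b). Intersecting over `k` gives (a), and (b) applied to
`h = f - g ∈ J + m_k` gives (c).
-/

theorem ker_eq_ker_of_surjective_of_finrank_le {K V W Q : Type*} [DivisionRing K]
    [AddCommGroup V] [Module K V] [AddCommGroup W] [Module K W] [FiniteDimensional K W]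
    [AddCommGroup Q] [Module K Q] {f : V →ₗ[K] W} {g : V →ₗ[K] Q}
    (hker : f.ker ≤ g.ker) (hg : Function.Surjective g)
    (hdim : Module.finrank K W ≤ Module.finrank K Q) : f.ker = g.ker := by
  obtain ⟨r, hr⟩ := (f.ker.liftQ f le_rfl).exists_leftInverse_of_injective
    (Submodule.ker_liftQ_eq_bot _ _ _ le_rfl)
  let φ : W →ₗ[K] Q := f.ker.liftQ g hker ∘ₗ r
  have hφ (v : V) : φ (f v) = g v :=
    congrArg (f.ker.liftQ g hker) (LinearMap.congr_fun hr (f.ker.mkQ v))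
  have φ_surjective : Function.Surjective φ := fun q =>
    let ⟨v, hv⟩ := hg q
    ⟨f v, (hφ v).trans hv⟩
  have : FiniteDimensional K Q := .of_surjective φ φ_surjective
  have φ_injective : Function.Injective φ :=
    (LinearMap.injective_iff_surjective_of_finrank_eq_finrank
      (hdim.antisymm (LinearMap.finrank_le_finrank_of_surjective φ_surjective))).2 φ_surjective
  refine hker.antisymm fun v hv => ?_
  rw [LinearMap.mem_ker] at hv ⊢
  exact φ_injective (by rw [hφ, hv, map_zero])

theorem finite_setOf_notMem_expDegree_le {σ : Type*} [Finite σ] (N : Set (σ →₀ ℕ)) (k : ℕ) :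
    {α : σ →₀ ℕ | α ∉ N ∧ expDegree α ≤ k}.Finite :=
  (Finsupp.finite_of_degree_le k).subset fun _ hα => hα.2

/-- The linear map taking a power series to the family of its coefficients at the exponents in
`S`; it turns congruences modulo `m_{k+1}` into linear algebra in coordinate space. -/
def coeffsOn (K : Type*) [Semiring K] {σ : Type*} (S : Set (σ →₀ ℕ)) :
    MvPowerSeries σ K →ₗ[K] (S → K) :=
  LinearMap.pi fun α => MvPowerSeries.coeff α.1

theorem coeffsOn_eq_zero_iff {K σ : Type*} [Semiring K] {S : Set (σ →₀ ℕ)}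
    {f : MvPowerSeries σ K} :
    coeffsOn K S f = 0 ↔ ∀ α ∈ S, MvPowerSeries.coeff α f = 0 := by
  simp [coeffsOn, funext_iff]

section

variable {K : Type*} [Field K] {σ : Type*} {N : Set (σ →₀ ℕ)} {k : ℕ}

theorem coeffsOn_eq_zero_iff_mem_mIdl {f : MvPowerSeries σ K}
    (hf : f ∈ coSupported K σ N) :
    coeffsOn K {α | α ∉ N ∧ expDegree α ≤ k} f = 0 ↔ f ∈ mIdl K σ (k + 1) := by
  rw [coeffsOn_eq_zero_iff]
  constructor
  · intro h α hα
    by_cases hN : α ∈ N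
    · exact hf α hN
    · exact h α ⟨hN, Nat.lt_succ_iff.1 hα⟩
  · exact fun h α hα => h α (Nat.lt_succ_iff.2 hα.2)

theorem mem_iff_mem_mIdl_of_encard_le_finrank {P : Submodule K (MvPowerSeries σ K)}
    (hP : (mIdl K σ (k + 1)).restrictScalars K ≤ P)
    (hsum : ∀ f, ∃ h ∈ coSupported K σ N, f - h ∈ P)
    (hdim : {α : σ →₀ ℕ | α ∉ N ∧ expDegree α ≤ k}.encard ≤
      Module.finrank K (MvPowerSeries σ K ⧸ P))
    {f : MvPowerSeries σ K} (hf : f ∈ coSupported K σ N) :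
    f ∈ P ↔ f ∈ mIdl K σ (k + 1) := by
  set S := {α : σ →₀ ℕ | α ∉ N ∧ expDegree α ≤ k}
  obtain ⟨S_finite, S_card⟩ := Set.encard_le_coe_iff_finite_ncard_le.1 hdim
  have : Fintype S := S_finite.fintype
  let coeffs : coSupported K σ N →ₗ[K] (S → K) := coeffsOn K S ∘ₗ (coSupported K σ N).subtype
  let toQuotient : coSupported K σ N →ₗ[K] MvPowerSeries σ K ⧸ P :=
    P.mkQ ∘ₗ (coSupported K σ N).subtype
  have mem_ker_coeffs (h : coSupported K σ N) : h ∈ coeffs.ker ↔ h.1 ∈ mIdl K σ (k + 1) :=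
    coeffsOn_eq_zero_iff_mem_mIdl h.2
  have mem_ker_toQuotient (h : coSupported K σ N) : h ∈ toQuotient.ker ↔ h.1 ∈ P :=
    Submodule.Quotient.mk_eq_zero P
  have toQuotient_surjective : Function.Surjective toQuotient := fun q => by
    obtain ⟨p, rfl⟩ := P.mkQ_surjective q
    obtain ⟨h, hN, hp⟩ := hsum p
    exact ⟨⟨h, hN⟩, ((Submodule.Quotient.eq P).2 hp).symm⟩
  have finrank_le : Module.finrank K (S → K) ≤ Module.finrank K (MvPowerSeries σ K ⧸ P) := by
    rwa [Module.finrank_fintype_fun_eq_card, Fintype.card_eq_nat_card, Nat.card_coe_set_eq]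
  have ker_eq : coeffs.ker = toQuotient.ker :=
    ker_eq_ker_of_surjective_of_finrank_le
      (fun h hh => (mem_ker_toQuotient h).2 (hP ((mem_ker_coeffs h).1 hh)))
      toQuotient_surjective finrank_le
  rw [← mem_ker_toQuotient ⟨f, hf⟩, ← ker_eq, mem_ker_coeffs]

theorem eq_zero_of_forall_mem_mIdl {f : MvPowerSeries σ K}
    (hf : ∀ k, f ∈ mIdl K σ (k + 1)) : f = 0 := by
  ext α
  exact hf (expDegree α) α (Nat.lt_succ_self _)

theorem mem_mIdl_zero (f : MvPowerSeries σ K) : f ∈ mIdl K σ 0 :=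
  fun _ hα => absurd hα (Nat.not_lt_zero _)

end

/-- The bound on the extended cardinality forces `{α ∉ N : |α| ≤ k}` to be finite, which is not
automatic in infinitely many variables. -/
theorem stmt_13_general {K : Type*} [Field K] {σ : Type*}
    (N : Set (σ →₀ ℕ)) (J : Submodule K (MvPowerSeries σ K))
    (hsum : ∀ (k : ℕ) (f : MvPowerSeries σ K), ∃ h ∈ coSupported K σ N,
      f - h ∈ J ⊔ (mIdl K σ (k + 1)).restrictScalars K)
    (hdim : ∀ k : ℕ, {α : σ →₀ ℕ | α ∉ N ∧ expDegree α ≤ k}.encard ≤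
      Module.finrank K (MvPowerSeries σ K ⧸ (J ⊔ (mIdl K σ (k + 1)).restrictScalars K))) :
    (∀ f : MvPowerSeries σ K, f ∈ J → f ∈ coSupported K σ N → f = 0) ∧
    (∀ k : ℕ, ∀ f ∈ coSupported K σ N,
      (f ∈ J ⊔ (mIdl K σ (k + 1)).restrictScalars K ↔ f ∈ mIdl K σ (k + 1))) ∧
    (∀ (k : ℕ) (f g h : MvPowerSeries σ K), g ∈ J → h ∈ coSupported K σ N → f = g + h →
      f ∈ mIdl K σ k → g ∈ mIdl K σ k ∧ h ∈ mIdl K σ k) := by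
  have mem_sup_iff (k : ℕ) (f : MvPowerSeries σ K) (hf : f ∈ coSupported K σ N) :
      f ∈ J ⊔ (mIdl K σ (k + 1)).restrictScalars K ↔ f ∈ mIdl K σ (k + 1) :=
    mem_iff_mem_mIdl_of_encard_le_finrank le_sup_right (hsum k) (hdim k) hf
  refine ⟨fun f hJ hN => ?_, mem_sup_iff, ?_⟩
  · exact eq_zero_of_forall_mem_mIdl fun k =>
      (mem_sup_iff k f hN).1 (Submodule.mem_sup_left hJ)
  · rintro (_ | k) _ g h hg hh rfl hf
    · exact ⟨mem_mIdl_zero g, mem_mIdl_zero h⟩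
    · have h_mem_sup : h ∈ J ⊔ (mIdl K σ (k + 1)).restrictScalars K := by
        rw [← add_sub_cancel_left g h]
        exact sub_mem (Submodule.mem_sup_right hf) (Submodule.mem_sup_left hg)
      have h_mem : h ∈ mIdl K σ (k + 1) := (mem_sup_iff k h hh).1 h_mem_sup
      exact ⟨(Submodule.add_mem_iff_left _ h_mem).1 hf, h_mem⟩

/-- **The Claim in the proof of Theorem 6.18 (Bierstone–Milman,
"Desingularization algorithms I").**
If `R = J + R^N` and, for every `k`, `R/(J + m^{k+1})` has dimension
`#{α ∉ N : |α| ≤ k}`, then (a) `J ∩ R^N = 0` (so `R = J ⊕ R^N`);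
(b) `R^N ∩ (J + m^{k+1}) = R^N ∩ m^{k+1}` for every `k`; and (c) if
`f = g + h` with `g ∈ J`, `h ∈ R^N` and `f` has order `≥ k`, then so do
`g` and `h`. -/
theorem stmt_13 {K : Type*} [Field K] {n : ℕ}
    (N : Set (Fin n →₀ ℕ)) (J : Ideal (MvPowerSeries (Fin n) K))
    (hsum : ∀ f : MvPowerSeries (Fin n) K,
      ∃ g ∈ J, ∃ h ∈ coSupported K (Fin n) N, f = g + h)
    (hdim : ∀ k : ℕ,
      Module.Finite K (MvPowerSeries (Fin n) K ⧸ (J ⊔ mIdl K (Fin n) (k + 1))) ∧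
      Module.finrank K
          (MvPowerSeries (Fin n) K ⧸ (J ⊔ mIdl K (Fin n) (k + 1)))
        = Set.ncard {α : Fin n →₀ ℕ | α ∉ N ∧ expDegree α ≤ k}) :
    (∀ f : MvPowerSeries (Fin n) K,
      f ∈ J → f ∈ coSupported K (Fin n) N → f = 0) ∧
    (∀ k : ℕ, ∀ f ∈ coSupported K (Fin n) N,
      (f ∈ J ⊔ mIdl K (Fin n) (k + 1) ↔ f ∈ mIdl K (Fin n) (k + 1))) ∧
    (∀ (k : ℕ) (f g h : MvPowerSeries (Fin n) K), g ∈ J →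
      h ∈ coSupported K (Fin n) N → f = g + h → f ∈ mIdl K (Fin n) k →
      g ∈ mIdl K (Fin n) k ∧ h ∈ mIdl K (Fin n) k) := by
  simpa only [← Submodule.restrictScalars_sup, Submodule.restrictScalars_mem] using
    stmt_13_general N (J.restrictScalars K)
      (fun k f =>
        let ⟨g, hg, h, hh, hf⟩ := hsum f
        ⟨h, hh, Submodule.mem_sup_left (by rwa [hf, add_sub_cancel_right])⟩)
      fun k => by
        rw [← Submodule.restrictScalars_sup,
          (Submodule.Quotient.restrictScalarsEquiv K _).finrank_eq, (hdim k).2,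
          (finite_setOf_notMem_expDegree_le N k).cast_ncard_eq]
end
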